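/- arXiv:2203.08375 — 2 statements merged into one kernel-verified Lean document; each statement's English description precedes it below -/
import Mathlib

section
/- For every d∈(0,1] there exists a function φ̄_d∈C²((0,d))∩C¹([0,d]) satisfying φ̄_d''(x₂)=f(φ̄_d(x₂)) for x₂∈(0,d), φ̄_d(0)=0, φ̄_d(d)=Q and 0<φ̄_d(x₂)<Q on (0,d); it is unique in this class, and moreover φ̄_d'(x₂)>0 for all x₂∈(0,d). -/
open Real Set MeasureTheory

noncomputable section

/-- `φ` solves the boundary value problem `φ'' = f(φ)` on `(0,d)`, `φ(0) = 0`,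
`φ(d) = Q`, `0 < φ < Q` on `(0,d)`, with `φ ∈ C²((0,d)) ∩ C¹([0,d])`. -/
def IsBVPSol (Q : ℝ) (f : ℝ → ℝ) (d : ℝ) (φ : ℝ → ℝ) : Prop :=
  ContDiffOn ℝ 1 φ (Set.Icc 0 d) ∧ ContDiffOn ℝ 2 φ (Set.Ioo 0 d) ∧
  (∀ x ∈ Set.Ioo (0 : ℝ) d, deriv (deriv φ) x = f (φ x)) ∧
  φ 0 = 0 ∧ φ d = Q ∧ (∀ x ∈ Set.Ioo (0 : ℝ) d, 0 < φ x ∧ φ x < Q)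

/-- A left inverse of a function continuous on a compact set is continuous on the image. -/
theorem IsCompact.continuousOn_image_of_leftInvOn {K : Set ℝ} (hK : IsCompact K) {g h : ℝ → ℝ}
    (hg : ContinuousOn g K) (hh : LeftInvOn h g K) : ContinuousOn h (g '' K) := by
  rw [continuousOn_iff_isClosed]
  intro t ht
  refine ⟨g '' (K ∩ t),
    ((hK.inter_right ht).image_of_continuousOn (hg.mono inter_subset_left)).isClosed, ?_⟩
  ext y
  constructor
  · rintro ⟨hy, x, hx, rfl⟩
    refine ⟨⟨x, ⟨hx, ?_⟩, rfl⟩, x, hx, rfl⟩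
    simpa [hh hx] using hy
  · rintro ⟨⟨x, ⟨hx, hxt⟩, rfl⟩, hy⟩
    refine ⟨?_, hy⟩
    simpa [hh hx] using hxt

/-- The inverse function rule for a left inverse of a strictly increasing function on `[a, b]`. -/
theorem HasDerivAt.of_leftInvOn_Icc {g g' h : ℝ → ℝ} {a b y : ℝ} (hab : a ≤ b)
    (hg : ContinuousOn g (Icc a b)) (hmono : StrictMonoOn g (Icc a b))
    (hh : LeftInvOn h g (Icc a b)) (hg' : ∀ x ∈ Ioo a b, HasDerivAt g (g' x) x)
    (hpos : ∀ x ∈ Ioo a b, 0 < g' x) (hy : y ∈ Ioo (g a) (g b)) :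
    HasDerivAt h (g' (h y))⁻¹ y := by
  have himage : g '' Icc a b = Icc (g a) (g b) := hg.image_Icc_of_monotoneOn hab hmono.monotoneOn
  have hcont : ContinuousOn h (Icc (g a) (g b)) :=
    himage ▸ isCompact_Icc.continuousOn_image_of_leftInvOn hg hh
  obtain ⟨x, hx, rfl⟩ := intermediate_value_Ioo hab hg hy
  have hx' : h (g x) = x := hh (Ioo_subset_Icc_self hx)
  refine HasDerivAt.of_local_left_inverse (f := g)
    (hcont.continuousAt (Icc_mem_nhds hy.1 hy.2)) ?_ ?_ ?_
  · rw [hx']; exact hg' x hx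
  · rw [hx']; exact (hpos x hx).ne'
  · filter_upwards [Icc_mem_nhds hy.1 hy.2] with z hz
    obtain ⟨w, hw, rfl⟩ := himage.symm ▸ hz
    rw [hh hw]

/-- A function continuous on `[a, b]` whose derivative on `(a, b)` is `k` is affine. -/
theorem eq_add_mul_of_hasDerivAt_const {g : ℝ → ℝ} {a b k : ℝ} (hg : ContinuousOn g (Icc a b))
    (hg' : ∀ x ∈ Ioo a b, HasDerivAt g k x) {x : ℝ} (hx : x ∈ Icc a b) :
    g x = g a + k * (x - a) := by
  rcases hx.1.eq_or_lt with rfl | hax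
  · simp
  · obtain ⟨c, -, hc⟩ := exists_hasDerivAt_eq_slope g (fun _ => k) hax
      (hg.mono (Icc_subset_Icc_right hx.2)) fun z hz => hg' z ⟨hz.1, hz.2.trans_le hx.2⟩
    rw [eq_div_iff (sub_pos.2 hax).ne'] at hc
    linarith

/-- A function continuous on `[a, b]` whose derivative on `(a, b)` extends continuously to `[a, b]`
is `C¹` on `[a, b]`. -/
theorem contDiffOn_one_Icc_of_hasDerivAt {g v : ℝ → ℝ} {a b : ℝ} (hab : a ≤ b)
    (hg : ContinuousOn g (Icc a b)) (hv : ContinuousOn v (Icc a b))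
    (hg' : ∀ x ∈ Ioo a b, HasDerivAt g (v x) x) : ContDiffOn ℝ 1 g (Icc a b) := by
  have hu : Continuous fun x => v (max a (min b x)) :=
    hv.comp_continuous (by fun_prop) fun x => ⟨le_max_left _ _, max_le hab (min_le_left _ _)⟩
  have hI : ∀ x, HasDerivAt (fun y => ∫ z in a..y, v (max a (min b z))) (v (max a (min b x))) x :=
    fun x => hu.integral_hasStrictDerivAt a x |>.hasDerivAt
  have hC : ContDiff ℝ 1 fun y => g a + ∫ z in a..y, v (max a (min b z)) := by
    refine contDiff_const.add (contDiff_one_iff_deriv.2 ⟨fun x => (hI x).differentiableAt, ?_⟩)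
    rw [funext fun x => (hI x).deriv]
    exact hu
  refine hC.contDiffOn.congr fun x hx => ?_
  rw [intervalIntegral.integral_eq_sub_of_hasDerivAt_of_le hx.1
    (hg.mono (Icc_subset_Icc_right hx.2)) ?_ (hu.intervalIntegrable _ _)]
  · ring
  · intro z hz
    have hzb : z < b := hz.2.trans_le hx.2
    rw [min_eq_right hzb.le, max_eq_right hz.1.le]
    exact hg' z ⟨hz.1, hzb⟩

/-- The cubic profile `t ↦ Q (3 t² - 2 t³)`. -/
def cubicProfile (Q t : ℝ) : ℝ := Q * (3 * t ^ 2 - 2 * t ^ 3)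

/-- The derivative of `cubicProfile`. -/
def cubicSpeed (Q t : ℝ) : ℝ := 6 * Q * (t * (1 - t))

theorem hasDerivAt_cubicProfile (Q t : ℝ) : HasDerivAt (cubicProfile Q) (cubicSpeed Q t) t := by
  have h := (((hasDerivAt_pow 2 t).const_mul 3).sub ((hasDerivAt_pow 3 t).const_mul 2)).const_mul Q
  refine h.congr_deriv ?_
  simp only [cubicSpeed]
  push_cast
  ring

theorem hasDerivAt_cubicSpeed (Q t : ℝ) :
    HasDerivAt (cubicSpeed Q) (6 * Q * (1 - 2 * t)) t := by
  have h := ((hasDerivAt_id t).mul ((hasDerivAt_id t).const_sub 1)).const_mul (6 * Q)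
  refine h.congr_deriv ?_
  simp only [id]
  ring

theorem continuous_cubicProfile (Q : ℝ) : Continuous (cubicProfile Q) := by
  unfold cubicProfile; fun_prop

theorem continuous_cubicSpeed (Q : ℝ) : Continuous (cubicSpeed Q) := by
  unfold cubicSpeed; fun_prop

theorem cubicProfile_zero (Q : ℝ) : cubicProfile Q 0 = 0 := by simp [cubicProfile]

theorem cubicProfile_one (Q : ℝ) : cubicProfile Q 1 = Q := by norm_num [cubicProfile]

theorem cubicSpeed_pos {Q t : ℝ} (hQ : 0 < Q) (ht : t ∈ Ioo (0 : ℝ) 1) : 0 < cubicSpeed Q t :=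
  mul_pos (by linarith) (mul_pos ht.1 (sub_pos.2 ht.2))

theorem strictMonoOn_cubicProfile {Q : ℝ} (hQ : 0 < Q) :
    StrictMonoOn (cubicProfile Q) (Icc 0 1) := by
  refine strictMonoOn_of_deriv_pos (convex_Icc 0 1) (continuous_cubicProfile Q).continuousOn ?_
  intro t ht
  rw [interior_Icc] at ht
  rw [(hasDerivAt_cubicProfile Q t).deriv]
  exact cubicSpeed_pos hQ ht

/-- The density `dx/dt` of the time map at energy level `c`. -/
def timeDensity (Q c t : ℝ) : ℝ := cubicSpeed Q t / √(cubicSpeed Q t ^ 2 + c)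

/-- The time map: the position at which the solution of energy level `c` reaches the value
`cubicProfile Q t`. -/
def timeMap (Q c t : ℝ) : ℝ := ∫ τ in (0 : ℝ)..t, timeDensity Q c τ

section TimeMap

variable {Q c : ℝ}

theorem norm_timeDensity_le_one (hc : 0 ≤ c) (t : ℝ) : ‖timeDensity Q c t‖ ≤ 1 := by
  rw [timeDensity, norm_div, Real.norm_eq_abs, Real.norm_eq_abs, abs_of_nonneg (sqrt_nonneg _)]
  refine div_le_one_of_le₀ (abs_le_sqrt (by linarith)) (sqrt_nonneg _)

theorem measurable_timeDensity (Q c : ℝ) : Measurable (timeDensity Q c) :=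
  (continuous_cubicSpeed Q).measurable.div
    (((continuous_cubicSpeed Q).pow 2).add continuous_const).sqrt.measurable

theorem intervalIntegrable_timeDensity (hc : 0 ≤ c) (a b : ℝ) :
    IntervalIntegrable (timeDensity Q c) volume a b :=
  (intervalIntegrable_const (c := (1 : ℝ))).mono_fun
    (measurable_timeDensity Q c).aestronglyMeasurable
    (Filter.Eventually.of_forall fun t => by simpa using norm_timeDensity_le_one hc t)

theorem energy_pos (hQ : 0 < Q) (hc : 0 ≤ c) {t : ℝ} (ht : t ∈ Ioo (0 : ℝ) 1) :
    0 < cubicSpeed Q t ^ 2 + c :=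
  add_pos_of_pos_of_nonneg (pow_pos (cubicSpeed_pos hQ ht) 2) hc

theorem timeDensity_pos (hQ : 0 < Q) (hc : 0 ≤ c) {t : ℝ} (ht : t ∈ Ioo (0 : ℝ) 1) :
    0 < timeDensity Q c t :=
  div_pos (cubicSpeed_pos hQ ht) (sqrt_pos.2 (energy_pos hQ hc ht))

theorem continuous_timeMap (hc : 0 ≤ c) : Continuous (timeMap Q c) :=
  intervalIntegral.continuous_primitive (intervalIntegrable_timeDensity hc) 0

theorem timeMap_zero (Q c : ℝ) : timeMap Q c 0 = 0 := intervalIntegral.integral_same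

theorem hasDerivAt_timeMap (hQ : 0 < Q) (hc : 0 ≤ c) {t : ℝ} (ht : t ∈ Ioo (0 : ℝ) 1) :
    HasDerivAt (timeMap Q c) (timeDensity Q c t) t := by
  refine intervalIntegral.integral_hasDerivAt_right (intervalIntegrable_timeDensity hc _ _)
    (measurable_timeDensity Q c).stronglyMeasurable.stronglyMeasurableAtFilter ?_
  have h := (continuous_cubicSpeed Q).continuousAt (x := t)
  exact h.div ((h.pow 2).add continuousAt_const).sqrt (sqrt_pos.2 (energy_pos hQ hc ht)).ne'

theorem strictMonoOn_timeMap (hQ : 0 < Q) (hc : 0 ≤ c) : StrictMonoOn (timeMap Q c) (Icc 0 1) := by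
  refine strictMonoOn_of_deriv_pos (convex_Icc 0 1) (continuous_timeMap hc).continuousOn ?_
  intro t ht
  rw [interior_Icc] at ht
  rw [(hasDerivAt_timeMap hQ hc ht).deriv]
  exact timeDensity_pos hQ hc ht

theorem timeMap_one_strictAntiOn (hQ : 0 < Q) :
    StrictAntiOn (fun c => timeMap Q c 1) (Ici 0) := by
  intro c hc e he hce
  have hmono : StrictMonoOn (fun t => timeMap Q c t - timeMap Q e t) (Icc 0 1) := by
    refine strictMonoOn_of_deriv_pos (convex_Icc 0 1)
      ((continuous_timeMap hc).sub (continuous_timeMap he)).continuousOn ?_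
    intro t ht
    rw [interior_Icc] at ht
    rw [((hasDerivAt_timeMap hQ hc ht).fun_sub (hasDerivAt_timeMap hQ he ht)).deriv, sub_pos]
    exact div_lt_div_of_pos_left (cubicSpeed_pos hQ ht) (sqrt_pos.2 (energy_pos hQ hc ht))
      (sqrt_lt_sqrt (energy_pos hQ hc ht).le (by linarith))
  have h := hmono (left_mem_Icc.2 zero_le_one) (right_mem_Icc.2 zero_le_one) zero_lt_one
  simp only [timeMap_zero] at h
  show timeMap Q e 1 < timeMap Q c 1
  linarith

theorem continuousOn_timeMap_one (Q : ℝ) : ContinuousOn (fun c => timeMap Q c 1) (Ici 0) := by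
  intro c hc
  refine intervalIntegral.continuousWithinAt_of_dominated_interval (bound := fun _ => 1)
    (Filter.Eventually.of_forall fun e => (measurable_timeDensity Q e).aestronglyMeasurable)
    ?_ intervalIntegrable_const (Filter.Eventually.of_forall fun t _ => ?_)
  · filter_upwards [self_mem_nhdsWithin] with e he
    exact Filter.Eventually.of_forall fun t _ => norm_timeDensity_le_one he t
  · rcases eq_or_ne (cubicSpeed Q t) 0 with h0 | h0
    · simp only [timeDensity, h0, zero_div]
      exact continuousWithinAt_const
    · have hpos : 0 < cubicSpeed Q t ^ 2 + c :=
        add_pos_of_pos_of_nonneg (by positivity) hc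
      refine ContinuousAt.continuousWithinAt ?_
      exact continuousAt_const.div (continuousAt_const.add continuousAt_id).sqrt
        (sqrt_pos.2 hpos).ne'

theorem timeMap_zero_energy_one (hQ : 0 < Q) : timeMap Q 0 1 = 1 := by
  have h := eq_add_mul_of_hasDerivAt_const (k := 1) (continuous_timeMap (Q := Q) le_rfl).continuousOn
    (fun t ht => (hasDerivAt_timeMap hQ le_rfl ht).congr_deriv ?_) (right_mem_Icc.2 zero_le_one)
  · simpa [timeMap_zero] using h
  · have hW := cubicSpeed_pos hQ ht
    rw [timeDensity, add_zero, sqrt_sq hW.le, div_self hW.ne']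

theorem timeMap_sq_one_le (hQ : 0 < Q) {d : ℝ} (hd : 0 < d) : timeMap Q ((Q / d) ^ 2) 1 ≤ d := by
  have hint : ∫ t in (0 : ℝ)..1, cubicSpeed Q t / (Q / d) = d := by
    rw [intervalIntegral.integral_div, intervalIntegral.integral_eq_sub_of_hasDerivAt
      (fun t _ => hasDerivAt_cubicProfile Q t)
      ((continuous_cubicSpeed Q).intervalIntegrable _ _), cubicProfile_one, cubicProfile_zero]
    field_simp
    ring
  calc timeMap Q ((Q / d) ^ 2) 1 ≤ ∫ t in (0 : ℝ)..1, cubicSpeed Q t / (Q / d) := by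
        refine intervalIntegral.integral_mono_on_of_le_Ioo zero_le_one
          (intervalIntegrable_timeDensity (sq_nonneg _) _ _)
          (((continuous_cubicSpeed Q).div_const _).intervalIntegrable _ _) fun t ht => ?_
        exact div_le_div_of_nonneg_left (cubicSpeed_pos hQ ht).le (by positivity)
          (le_sqrt_of_sq_le (by nlinarith [sq_nonneg (cubicSpeed Q t)]))
    _ = d := hint

theorem exists_timeMap_one_eq (hQ : 0 < Q) {d : ℝ} (hd : d ∈ Ioc (0 : ℝ) 1) :
    ∃ c, 0 ≤ c ∧ timeMap Q c 1 = d := by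
  obtain ⟨c, hc, h⟩ := intermediate_value_Icc' (sq_nonneg (Q / d))
    ((continuousOn_timeMap_one Q).mono Icc_subset_Ici_self)
    (show d ∈ Icc _ _ from ⟨timeMap_sq_one_le hQ hd.1, (timeMap_zero_energy_one hQ).symm ▸ hd.2⟩)
  exact ⟨c, hc.1, h⟩

end TimeMap

theorem exists_cubicProfile_eq {Q s : ℝ} (hs : s ∈ Icc 0 Q) :
    ∃ t ∈ Icc (0 : ℝ) 1, cubicProfile Q t = s :=
  intermediate_value_Icc zero_le_one (continuous_cubicProfile Q).continuousOn
    (by rwa [cubicProfile_zero, cubicProfile_one])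

section Inverse

variable {Q : ℝ} {κ : ℝ → ℝ}

theorem cubicProfile_leftInvOn (hκ : LeftInvOn κ (cubicProfile Q) (Icc 0 1)) {s : ℝ}
    (hs : s ∈ Icc 0 Q) : cubicProfile Q (κ s) = s := by
  obtain ⟨t, ht, rfl⟩ := exists_cubicProfile_eq hs
  rw [hκ ht]

theorem Set.LeftInvOn.mem_Icc_of_cubicProfile (hκ : LeftInvOn κ (cubicProfile Q) (Icc 0 1)) {s : ℝ}
    (hs : s ∈ Icc 0 Q) : κ s ∈ Icc (0 : ℝ) 1 := by
  obtain ⟨t, ht, rfl⟩ := exists_cubicProfile_eq hs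
  rwa [hκ ht]

theorem Set.LeftInvOn.mem_Ioo_of_cubicProfile (hκ : LeftInvOn κ (cubicProfile Q) (Icc 0 1)) {s : ℝ}
    (hs : s ∈ Ioo 0 Q) : κ s ∈ Ioo (0 : ℝ) 1 := by
  obtain ⟨t, ht, rfl⟩ := intermediate_value_Ioo zero_le_one
    (continuous_cubicProfile Q).continuousOn
    (show s ∈ Ioo _ _ by rwa [cubicProfile_zero, cubicProfile_one])
  rwa [hκ (Ioo_subset_Icc_self ht)]

theorem Set.LeftInvOn.continuousOn_of_cubicProfile (hQ : 0 < Q)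
    (hκ : LeftInvOn κ (cubicProfile Q) (Icc 0 1)) : ContinuousOn κ (Icc 0 Q) := by
  have h := isCompact_Icc.continuousOn_image_of_leftInvOn
    (continuous_cubicProfile Q).continuousOn hκ
  rwa [(continuous_cubicProfile Q).continuousOn.image_Icc_of_monotoneOn zero_le_one
    (strictMonoOn_cubicProfile hQ).monotoneOn, cubicProfile_zero, cubicProfile_one] at h

theorem Set.LeftInvOn.hasDerivAt_of_cubicProfile (hQ : 0 < Q)
    (hκ : LeftInvOn κ (cubicProfile Q) (Icc 0 1)) {s : ℝ} (hs : s ∈ Ioo 0 Q) :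
    HasDerivAt κ (cubicSpeed Q (κ s))⁻¹ s :=
  HasDerivAt.of_leftInvOn_Icc zero_le_one (continuous_cubicProfile Q).continuousOn
    (strictMonoOn_cubicProfile hQ) hκ (fun t _ => hasDerivAt_cubicProfile Q t)
    (fun _ ht => cubicSpeed_pos hQ ht) (by rwa [cubicProfile_zero, cubicProfile_one])

end Inverse

/-- Every solution has positive derivative and is inverted by a time map. -/
theorem IsBVPSol.deriv_pos_and_exists_timeMap_eq {Q d : ℝ} (hQ : 0 < Q) (hd : 0 < d)
    {κ f φ : ℝ → ℝ} (hκ : LeftInvOn κ (cubicProfile Q) (Icc 0 1))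
    (hf : ∀ s, f s = 6 * Q * (1 - 2 * κ s)) (hφ : IsBVPSol Q f d φ) :
    (∀ x ∈ Ioo 0 d, 0 < deriv φ x) ∧
      ∃ c, 0 ≤ c ∧ ∀ x ∈ Icc 0 d, timeMap Q c (κ (φ x)) = x := by
  obtain ⟨hC1, hC2, hode, h0, h1, hmem⟩ := hφ
  have hκ0 : κ 0 = 0 := by simpa [cubicProfile_zero] using hκ (left_mem_Icc.2 zero_le_one)
  have hmaps : MapsTo φ (Icc 0 d) (Icc 0 Q) := by
    intro x hx
    rcases hx.1.eq_or_lt with rfl | hx0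
    · rw [h0]; exact ⟨le_rfl, hQ.le⟩
    rcases hx.2.eq_or_lt with rfl | hxd
    · rw [h1]; exact ⟨hQ.le, le_rfl⟩
    · exact Ioo_subset_Icc_self (hmem x ⟨hx0, hxd⟩)
  have hT : ContinuousOn (fun x => κ (φ x)) (Icc 0 d) :=
    (LeftInvOn.continuousOn_of_cubicProfile hQ hκ).comp hC1.continuousOn hmaps
  have hφ' : ∀ x ∈ Ioo 0 d, HasDerivAt φ (deriv φ x) x := fun x hx =>
    ((hC2.differentiableOn (by norm_num)).differentiableAt (isOpen_Ioo.mem_nhds hx)).hasDerivAt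
  have hφ'' : ∀ x ∈ Ioo 0 d, HasDerivAt (deriv φ) (6 * Q * (1 - 2 * κ (φ x))) x := by
    intro x hx
    have hdiff : ContDiffOn ℝ 1 (deriv φ) (Ioo 0 d) :=
      ((contDiffOn_succ_iff_deriv_of_isOpen isOpen_Ioo).1
        (show ContDiffOn ℝ (1 + 1) φ (Ioo 0 d) by rwa [one_add_one_eq_two])).2.2
    have h := ((hdiff.differentiableOn (by norm_num)).differentiableAt
      (isOpen_Ioo.mem_nhds hx)).hasDerivAt
    rwa [hode x hx, hf] at h
  have hT' : ∀ x ∈ Ioo 0 d,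
      HasDerivAt (fun x => κ (φ x)) ((cubicSpeed Q (κ (φ x)))⁻¹ * deriv φ x) x := fun x hx =>
    (LeftInvOn.hasDerivAt_of_cubicProfile hQ hκ (hmem x hx)).comp x (hφ' x hx)
  have hTmem : ∀ x ∈ Ioo 0 d, κ (φ x) ∈ Ioo (0 : ℝ) 1 := fun x hx =>
    LeftInvOn.mem_Ioo_of_cubicProfile hκ (hmem x hx)
  have hp : ContinuousOn (derivWithin φ (Icc 0 d)) (Icc 0 d) :=
    hC1.continuousOn_derivWithin (uniqueDiffOn_Icc hd) le_rfl
  have hpe : ∀ x ∈ Ioo 0 d, derivWithin φ (Icc 0 d) x = deriv φ x := fun x hx =>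
    derivWithin_of_mem_nhds (Icc_mem_nhds hx.1 hx.2)
  set c : ℝ := derivWithin φ (Icc 0 d) 0 ^ 2 with hc
  have hc0 : 0 ≤ c := sq_nonneg _
  have henergy : ∀ x ∈ Ioo 0 d, deriv φ x ^ 2 = cubicSpeed Q (κ (φ x)) ^ 2 + c := by
    intro x hx
    have h := eq_add_mul_of_hasDerivAt_const (k := 0)
      (g := fun x => derivWithin φ (Icc 0 d) x ^ 2 - cubicSpeed Q (κ (φ x)) ^ 2)
      ((hp.pow 2).sub (((continuous_cubicSpeed Q).comp_continuousOn hT).pow 2)) ?_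
      (Ioo_subset_Icc_self hx)
    · simp only [h0, hκ0, hpe x hx, ← hc] at h
      simp only [cubicSpeed] at h ⊢
      linarith
    · intro y hy
      have hW := (cubicSpeed_pos hQ (hTmem y hy)).ne'
      have h := ((hφ'' y hy).fun_pow 2).fun_sub
        (((hasDerivAt_cubicSpeed Q (κ (φ y))).comp y (hT' y hy)).fun_pow 2)
      refine (h.congr_of_eventuallyEq ?_).congr_deriv ?_
      · filter_upwards [isOpen_Ioo.mem_nhds hy] with z hz
        simp only [hpe z hz, Function.comp]
      · simp only [Function.comp]
        field_simp
        ring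
  have hne : ∀ x ∈ Ioo 0 d, deriv φ x ≠ 0 := by
    intro x hx hzero
    have h := henergy x hx
    rw [hzero] at h
    linarith [energy_pos hQ hc0 (hTmem x hx)]
  have hpos : ∀ x ∈ Ioo 0 d, 0 < deriv φ x := by
    intro x hx
    obtain ⟨y, hy, hslope⟩ := exists_hasDerivAt_eq_slope φ (deriv φ) hd hC1.continuousOn hφ'
    have hypos : 0 < deriv φ y := by
      rw [hslope, h0, h1]
      exact div_pos (by linarith) (by linarith)
    by_contra! hxneg
    obtain ⟨z, hz, hz0⟩ := isPreconnected_Ioo.intermediate_value hx hy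
      (fun z hz => (hφ'' z hz).continuousAt.continuousWithinAt) ⟨hxneg, hypos.le⟩
    exact hne z hz hz0
  refine ⟨hpos, c, hc0, fun x hx => ?_⟩
  have h := eq_add_mul_of_hasDerivAt_const (k := 1) (g := fun x => timeMap Q c (κ (φ x)))
    ((continuous_timeMap hc0).comp_continuousOn hT) ?_ hx
  · simpa [h0, hκ0, timeMap_zero] using h
  · intro y hy
    refine ((hasDerivAt_timeMap hQ hc0 (hTmem y hy)).comp y (hT' y hy)).congr_deriv ?_
    have hW := (cubicSpeed_pos hQ (hTmem y hy)).ne'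
    have hp' := (hpos y hy).ne'
    rw [timeDensity, ← henergy y hy, sqrt_sq (hpos y hy).le]
    field_simp

/-- Inverting a time map yields a solution. -/
theorem exists_isBVPSol {Q c d : ℝ} (hQ : 0 < Q) (hc : 0 ≤ c) (hd : 0 < d)
    (hcd : timeMap Q c 1 = d) {κ f : ℝ → ℝ} (hκ : LeftInvOn κ (cubicProfile Q) (Icc 0 1))
    (hf : ∀ s, f s = 6 * Q * (1 - 2 * κ s)) : ∃ φ, IsBVPSol Q f d φ := by
  have hmono := strictMonoOn_timeMap hQ hc
  have hcont := (continuous_timeMap (Q := Q) hc).continuousOn (s := Icc 0 1)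
  set T : ℝ → ℝ := Function.invFunOn (timeMap Q c) (Icc 0 1)
  have hT : LeftInvOn T (timeMap Q c) (Icc 0 1) := hmono.injOn.leftInvOn_invFunOn
  have hT0 : T 0 = 0 := by simpa [timeMap_zero] using hT (left_mem_Icc.2 zero_le_one)
  have hT1 : T d = 1 := hcd ▸ hT (right_mem_Icc.2 zero_le_one)
  have hTcont : ContinuousOn T (Icc 0 d) := by
    have h := isCompact_Icc.continuousOn_image_of_leftInvOn hcont hT
    rwa [hcont.image_Icc_of_monotoneOn zero_le_one hmono.monotoneOn, timeMap_zero, hcd] at h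
  have hTmem : ∀ x ∈ Ioo 0 d, T x ∈ Ioo (0 : ℝ) 1 := by
    intro x hx
    obtain ⟨t, ht, rfl⟩ := intermediate_value_Ioo zero_le_one hcont
      (show x ∈ Ioo _ _ by rwa [timeMap_zero, hcd])
    rwa [hT (Ioo_subset_Icc_self ht)]
  have hT' : ∀ x ∈ Ioo 0 d, HasDerivAt T (timeDensity Q c (T x))⁻¹ x := fun x hx =>
    HasDerivAt.of_leftInvOn_Icc zero_le_one hcont hmono hT (fun t => hasDerivAt_timeMap hQ hc)
      (fun t => timeDensity_pos hQ hc) (by rwa [timeMap_zero, hcd])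
  set v : ℝ → ℝ := fun x => √(cubicSpeed Q (T x) ^ 2 + c)
  have hvcont : ContinuousOn v (Icc 0 d) :=
    ((((continuous_cubicSpeed Q).comp_continuousOn hTcont).pow 2).add continuousOn_const).sqrt
  have hφ' : ∀ x ∈ Ioo 0 d, HasDerivAt (fun x => cubicProfile Q (T x)) (v x) x := by
    intro x hx
    refine ((hasDerivAt_cubicProfile Q (T x)).comp x (hT' x hx)).congr_deriv ?_
    have hW := (cubicSpeed_pos hQ (hTmem x hx)).ne'
    rw [timeDensity, inv_div, mul_div_cancel₀ _ hW]
  have hv' : ∀ x ∈ Ioo 0 d, HasDerivAt v (6 * Q * (1 - 2 * T x)) x := by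
    intro x hx
    have hE := energy_pos hQ hc (hTmem x hx)
    have hW := (cubicSpeed_pos hQ (hTmem x hx)).ne'
    have hS := (sqrt_pos.2 hE).ne'
    refine (((((hasDerivAt_cubicSpeed Q (T x)).comp x (hT' x hx)).fun_pow 2).add_const c).sqrt
      hE.ne').congr_deriv ?_
    simp only [timeDensity, Function.comp]
    field_simp
    norm_num
    ring
  have hderiv : EqOn (deriv fun x => cubicProfile Q (T x)) v (Ioo 0 d) := fun x hx =>
    (hφ' x hx).deriv
  have hderiv2 : ∀ x ∈ Ioo 0 d, HasDerivAt (deriv fun x => cubicProfile Q (T x))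
      (6 * Q * (1 - 2 * T x)) x := fun x hx =>
    (hv' x hx).congr_of_eventuallyEq (hderiv.eventuallyEq_of_mem (isOpen_Ioo.mem_nhds hx))
  have hφcont : ContinuousOn (fun x => cubicProfile Q (T x)) (Icc 0 d) :=
    (continuous_cubicProfile Q).comp_continuousOn hTcont
  refine ⟨fun x => cubicProfile Q (T x),
    contDiffOn_one_Icc_of_hasDerivAt hd.le hφcont hvcont hφ', ?_, ?_, ?_, ?_, ?_⟩
  · rw [← one_add_one_eq_two, contDiffOn_succ_iff_deriv_of_isOpen isOpen_Ioo]
    refine ⟨fun x hx => (hφ' x hx).differentiableAt.differentiableWithinAt, by simp, ?_⟩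
    rw [← zero_add 1, contDiffOn_succ_iff_deriv_of_isOpen isOpen_Ioo]
    refine ⟨fun x hx => (hderiv2 x hx).differentiableAt.differentiableWithinAt, by simp, ?_⟩
    rw [contDiffOn_zero]
    refine ContinuousOn.congr ?_ fun x hx => (hderiv2 x hx).deriv
    have := hTcont.mono Ioo_subset_Icc_self
    fun_prop
  · intro x hx
    rw [(hderiv2 x hx).deriv, hf, hκ (Ioo_subset_Icc_self (hTmem x hx))]
  · simp only [hT0, cubicProfile_zero]
  · simp only [hT1, cubicProfile_one]
  · intro x hx
    have ht := hTmem x hx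
    have hlt := strictMonoOn_cubicProfile hQ (left_mem_Icc.2 zero_le_one)
      (Ioo_subset_Icc_self ht) ht.1
    have hgt := strictMonoOn_cubicProfile hQ (Ioo_subset_Icc_self ht)
      (right_mem_Icc.2 zero_le_one) ht.2
    rw [cubicProfile_zero] at hlt
    rw [cubicProfile_one] at hgt
    exact ⟨hlt, hgt⟩

/-- Two solutions of the boundary value problem agree on `[0, d]`. -/
theorem IsBVPSol.eqOn {Q d : ℝ} (hQ : 0 < Q) (hd : 0 < d) {κ f φ ψ : ℝ → ℝ}
    (hκ : LeftInvOn κ (cubicProfile Q) (Icc 0 1)) (hf : ∀ s, f s = 6 * Q * (1 - 2 * κ s))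
    (hφ : IsBVPSol Q f d φ) (hψ : IsBVPSol Q f d ψ) : EqOn φ ψ (Icc 0 d) := by
  obtain ⟨-, c, hc, hcφ⟩ := hφ.deriv_pos_and_exists_timeMap_eq hQ hd hκ hf
  obtain ⟨-, e, he, heψ⟩ := hψ.deriv_pos_and_exists_timeMap_eq hQ hd hκ hf
  obtain ⟨-, -, -, hφ0, hφd, hφmem⟩ := hφ
  obtain ⟨-, -, -, hψ0, hψd, hψmem⟩ := hψ
  have hdd := right_mem_Icc.2 hd.le
  have hκQ : κ Q = 1 := by
    simpa [cubicProfile_one] using hκ (right_mem_Icc.2 zero_le_one)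
  obtain rfl : c = e := by
    refine (timeMap_one_strictAntiOn hQ).injOn hc he ?_
    have h1 := hcφ d hdd
    have h2 := heψ d hdd
    rw [hφd, hκQ] at h1
    rw [hψd, hκQ] at h2
    exact h1.trans h2.symm
  intro x hx
  rcases hx.1.eq_or_lt with rfl | hx0
  · rw [hφ0, hψ0]
  rcases hx.2.eq_or_lt with rfl | hxd
  · rw [hφd, hψd]
  have h1 := Ioo_subset_Icc_self (hφmem x ⟨hx0, hxd⟩)
  have h2 := Ioo_subset_Icc_self (hψmem x ⟨hx0, hxd⟩)
  rw [← cubicProfile_leftInvOn hκ h1, ← cubicProfile_leftInvOn hκ h2,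
    (strictMonoOn_timeMap hQ hc).injOn (LeftInvOn.mem_Icc_of_cubicProfile hκ h1)
      (LeftInvOn.mem_Icc_of_cubicProfile hκ h2) ((hcφ x hx).trans (heψ x hx).symm)]

/-- Existence and uniqueness of the one-dimensional solution `φ̄_d` of the boundary
value problem, which moreover has strictly positive derivative on `(0,d)`. -/
theorem stmt9
    (Q : ℝ) (hQ : 0 < Q)
    (κ : ℝ → ℝ) (hκ : ∀ t ∈ Set.Icc (0 : ℝ) 1, κ (Q * (3 * t ^ 2 - 2 * t ^ 3)) = t)
    (f : ℝ → ℝ) (hf : ∀ s : ℝ, f s = 6 * Q * (1 - 2 * κ s)) :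
    ∀ d ∈ Set.Ioc (0 : ℝ) 1, ∃ φ : ℝ → ℝ, IsBVPSol Q f d φ ∧
      (∀ φ' : ℝ → ℝ, IsBVPSol Q f d φ' → Set.EqOn φ' φ (Set.Icc 0 d)) ∧
      (∀ x ∈ Set.Ioo (0 : ℝ) d, 0 < deriv φ x) := by
  intro d hd
  have hκ' : LeftInvOn κ (cubicProfile Q) (Icc 0 1) := hκ
  obtain ⟨c, hc, hcd⟩ := exists_timeMap_one_eq hQ hd
  obtain ⟨φ, hφ⟩ := exists_isBVPSol hQ hc hd.1 hcd hκ' hf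
  exact ⟨φ, hφ, fun ψ hψ => hψ.eqOn hQ hd.1 hκ' hf hφ,
    (hφ.deriv_pos_and_exists_timeMap_eq hQ hd.1 hκ' hf).1⟩
end
end

section
/- Let c₁>c₂≥0 and s≥0. For i=1,2 let dᵢ∈(0,1] and φ_{cᵢ}∈C²((0,dᵢ))∩C¹([0,dᵢ]) satisfy φ_{cᵢ}''=f(φ_{cᵢ}) on (0,dᵢ), φ_{cᵢ}(0)=0, φ_{cᵢ}'(0)=cᵢ, with 0<φ_{cᵢ}<Q on (0,dᵢ) and φ_{cᵢ}(dᵢ)=Q. Suppose x̄₂ satisfies x̄₂−s∈(0,d₁), x̄₂∈(0,d₂) and φ_{c₁}(x̄₂−s)=φ_{c₂}(x̄₂). Then φ_{c₁}(x₂−s)>φ_{c₂}(x₂) for all x₂ with x̄₂<x₂<min{d₁+s, d₂}, and φ_{c₁}(x₂−s)<φ_{c₂}(x₂) for all x₂ with s<x₂<x̄₂. In particular, even after a shift, two such solutions have at most one intersection point in the region where both take values in (0,Q). -/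
open Real Set MeasureTheory

noncomputable section

open Filter Topology

/-- A function with positive derivative at each of its zeros on `(a, b)` is positive to the right
of any zero. -/
theorem pos_right_of_deriv_pos_at_zeros {w w' : ℝ → ℝ} {a b z x : ℝ}
    (hw : ∀ y ∈ Ioo a b, HasDerivAt w (w' y) y)
    (hpos : ∀ y ∈ Ioo a b, w y = 0 → 0 < w' y)
    (hz : z ∈ Ioo a b) (hwz : w z = 0) (hzx : z < x) (hxb : x < b) : 0 < w x := by
  have hnonneg : ∀ y ∈ Ico z b, 0 ≤ w y := by
    intro y hy
    have hsub : ∀ t ∈ Icc z y, t ∈ Ioo a b := fun t ht =>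
      ⟨hz.1.trans_le ht.1, ht.2.trans_lt hy.2⟩
    exact image_le_of_deriv_right_lt_deriv_boundary' (f := fun _ => (0 : ℝ)) (f' := fun _ => 0)
      (B := w) (B' := w') (a := z) (b := y) continuousOn_const
      (fun t _ => hasDerivWithinAt_const _ _ _) hwz.ge
      (fun t ht => (hw t (hsub t ht)).continuousAt.continuousWithinAt)
      (fun t ht => (hw t (hsub t (Ico_subset_Icc_self ht))).hasDerivWithinAt)
      (fun t ht h => hpos t (hsub t (Ico_subset_Icc_self ht)) h.symm)
      (right_mem_Icc.2 hy.1)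
  refine (hnonneg x ⟨hzx.le, hxb⟩).lt_of_ne fun h => ?_
  have hx : x ∈ Ioo a b := ⟨hz.1.trans hzx, hxb⟩
  have hmin : IsLocalMin w x := by
    filter_upwards [Ioo_mem_nhds hzx hxb] with y hy
    rw [← h]
    exact hnonneg y (Ioo_subset_Ico_self hy)
  exact (hpos x hx h.symm).ne' (hmin.hasDerivAt_eq_zero (hw x hx))

/-- A function with positive derivative at each of its zeros on `(a, b)` is negative to the left
of any zero. -/
theorem neg_left_of_deriv_pos_at_zeros {w w' : ℝ → ℝ} {a b z x : ℝ}
    (hw : ∀ y ∈ Ioo a b, HasDerivAt w (w' y) y)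
    (hpos : ∀ y ∈ Ioo a b, w y = 0 → 0 < w' y)
    (hz : z ∈ Ioo a b) (hwz : w z = 0) (hax : a < x) (hxz : x < z) : w x < 0 := by
  have hmem : ∀ y ∈ Ioo (-b) (-a), -y ∈ Ioo a b := fun y hy =>
    ⟨lt_neg_of_lt_neg hy.2, neg_lt_of_neg_lt hy.1⟩
  have key := pos_right_of_deriv_pos_at_zeros (w := fun y => -w (-y)) (w' := fun y => w' (-y))
    (a := -b) (b := -a) (z := -z) (x := -x)
    (fun y hy => by
      exact ((hw (-y) (hmem y hy)).comp y (hasDerivAt_neg y)).neg.congr_deriv (by ring))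
    (fun y hy h => hpos (-y) (hmem y hy) (neg_eq_zero.1 h))
    ⟨neg_lt_neg hz.2, neg_lt_neg hz.1⟩ (by simpa using hwz) (neg_lt_neg hxz) (neg_lt_neg hax)
  simpa using key

/-- The cubic `t ↦ Q (3 t² - 2 t³)` maps `(0, 1)` onto `(0, Q)`. -/
theorem exists_cubic_eq {Q u : ℝ} (hu : u ∈ Ioo 0 Q) :
    ∃ t ∈ Ioo (0 : ℝ) 1, Q * (3 * t ^ 2 - 2 * t ^ 3) = u := by
  have hcont : ContinuousOn (fun t : ℝ => Q * (3 * t ^ 2 - 2 * t ^ 3)) (Icc 0 1) := by fun_prop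
  have := intermediate_value_Ioo zero_le_one hcont
  norm_num at this
  exact this hu

/-- Twice the primitive of `6 Q (1 - 2 κ)`, in terms of the inverse `κ` of the cubic. -/
def cubicEnergy (Q : ℝ) (κ : ℝ → ℝ) (u : ℝ) : ℝ :=
  36 * Q ^ 2 * (κ u ^ 2 * (1 - κ u) ^ 2)

section CubicInverse

variable {Q : ℝ} {κ : ℝ → ℝ}

theorem cubicEnergy_pos (hQ : 0 < Q)
    (hκ : ∀ t ∈ Icc (0 : ℝ) 1, κ (Q * (3 * t ^ 2 - 2 * t ^ 3)) = t) {u : ℝ}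
    (hu : u ∈ Ioo 0 Q) : 0 < cubicEnergy Q κ u := by
  obtain ⟨t, ht, rfl⟩ := exists_cubic_eq hu
  rw [cubicEnergy, hκ t (Ioo_subset_Icc_self ht)]
  have h₀ := ht.1
  have h₁ := sub_pos.2 ht.2
  positivity

theorem cubicEnergy_le (hQ : 0 < Q)
    (hκ : ∀ t ∈ Icc (0 : ℝ) 1, κ (Q * (3 * t ^ 2 - 2 * t ^ 3)) = t) {u : ℝ}
    (hu : u ∈ Ioo 0 Q) : cubicEnergy Q κ u ≤ 36 * Q * u := by
  obtain ⟨t, ht, rfl⟩ := exists_cubic_eq hu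
  rw [cubicEnergy, hκ t (Ioo_subset_Icc_self ht)]
  have h₀ := ht.1
  have h₁ := sub_pos.2 ht.2
  have h : t ^ 2 * (1 - t) ^ 2 ≤ 3 * t ^ 2 - 2 * t ^ 3 := by
    nlinarith [mul_pos (pow_pos h₀ 2) h₁, mul_pos (pow_pos h₀ 3) h₁]
  calc 36 * Q ^ 2 * (t ^ 2 * (1 - t) ^ 2) ≤ 36 * Q ^ 2 * (3 * t ^ 2 - 2 * t ^ 3) := by gcongr
    _ = _ := by ring

theorem hasDerivAt_cubicEnergy (hQ : 0 < Q)
    (hκ : ∀ t ∈ Icc (0 : ℝ) 1, κ (Q * (3 * t ^ 2 - 2 * t ^ 3)) = t) {u : ℝ}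
    (hu : u ∈ Ioo 0 Q) : HasDerivAt (cubicEnergy Q κ) (2 * (6 * Q * (1 - 2 * κ u))) u := by
  obtain ⟨t, ht, rfl⟩ := exists_cubic_eq hu
  have h₀ := ht.1
  have h₁ := sub_pos.2 ht.2
  have hg : HasStrictDerivAt (fun t : ℝ => Q * (3 * t ^ 2 - 2 * t ^ 3)) (6 * Q * (t * (1 - t)))
      t := by
    have h := ((((hasStrictDerivAt_id t).pow 2).const_mul 3).sub
      (((hasStrictDerivAt_id t).pow 3).const_mul 2)).const_mul Q
    have heq : Q * (3 * (2 * t) - 2 * (3 * t ^ 2)) = 6 * Q * (t * (1 - t)) := by ring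
    rw [← heq]
    simpa using h
  have hk : HasDerivAt κ (6 * Q * (t * (1 - t)))⁻¹ (Q * (3 * t ^ 2 - 2 * t ^ 3)) := by
    refine (hg.to_local_left_inverse (by positivity) ?_).hasDerivAt
    filter_upwards [Icc_mem_nhds ht.1 ht.2] with x hx using hκ x hx
  have h := ((hk.pow 2).mul ((hk.const_sub 1).pow 2)).const_mul (36 * Q ^ 2)
  refine h.congr_deriv ?_
  simp only [Pi.pow_apply]
  rw [hκ t (Ioo_subset_Icc_self ht)]
  have h₂ := h₁.ne'
  field_simp
  ring

/-- Conservation of energy for `φ'' = 6 Q (1 - 2 κ(φ))`, `φ(0) = 0`, `φ'(0) = c`. -/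
theorem sq_deriv_eq_add_cubicEnergy (hQ : 0 < Q)
    (hκ : ∀ t ∈ Icc (0 : ℝ) 1, κ (Q * (3 * t ^ 2 - 2 * t ^ 3)) = t)
    {c d : ℝ} (hd : 0 < d) {φ : ℝ → ℝ}
    (hC1 : ContDiffOn ℝ 1 φ (Icc 0 d)) (hC2 : ContDiffOn ℝ 2 φ (Ioo 0 d))
    (hode : ∀ x ∈ Ioo (0 : ℝ) d, deriv (deriv φ) x = 6 * Q * (1 - 2 * κ (φ x)))
    (h0 : φ 0 = 0) (hc : derivWithin φ (Icc 0 d) 0 = c)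
    (hb : ∀ x ∈ Ioo (0 : ℝ) d, φ x ∈ Ioo 0 Q) {x : ℝ} (hx : x ∈ Ioo 0 d) :
    deriv φ x ^ 2 = c ^ 2 + cubicEnergy Q κ (φ x) := by
  have hdiff : ∀ y ∈ Ioo (0 : ℝ) d, HasDerivAt φ (deriv φ y) y := fun y hy =>
    ((hC2.differentiableOn (by norm_num)).differentiableAt (isOpen_Ioo.mem_nhds hy)).hasDerivAt
  have hdiff2 : ∀ y ∈ Ioo (0 : ℝ) d,
      HasDerivAt (deriv φ) (6 * Q * (1 - 2 * κ (φ y))) y := fun y hy => by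
    rw [← hode y hy]
    exact (((hC2.deriv_of_isOpen isOpen_Ioo (m := 1) (by norm_num)).differentiableOn
      (by norm_num)).differentiableAt (isOpen_Ioo.mem_nhds hy)).hasDerivAt
  have hE : ∀ y ∈ Ioo (0 : ℝ) d,
      HasDerivAt (fun y => deriv φ y ^ 2 - cubicEnergy Q κ (φ y)) 0 y := fun y hy => by
    refine (((hdiff2 y hy).pow 2).sub
      ((hasDerivAt_cubicEnergy hQ hκ (hb y hy)).comp y (hdiff y hy))).congr_deriv ?_
    simp
    ring
  have hconst : ∀ y ∈ Ioo (0 : ℝ) d, deriv φ y ^ 2 - cubicEnergy Q κ (φ y) =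
      deriv φ x ^ 2 - cubicEnergy Q κ (φ x) := fun y hy =>
    isOpen_Ioo.is_const_of_deriv_eq_zero isPreconnected_Ioo
      (fun z hz => (hE z hz).differentiableAt.differentiableWithinAt)
      (fun z hz => (hE z hz).deriv) hy hx
  have hmem : Ioo 0 d ∈ 𝓝[>] (0 : ℝ) := Ioo_mem_nhdsGT hd
  have hle : 𝓝[>] (0 : ℝ) ≤ 𝓝[Icc 0 d] 0 :=
    (nhdsWithin_Ioo_eq_nhdsGT hd).ge.trans (nhdsWithin_mono _ Ioo_subset_Icc_self)
  have hφ : Tendsto φ (𝓝[>] 0) (𝓝 0) := by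
    have := (hC1.continuousOn 0 ⟨le_rfl, hd.le⟩).tendsto.mono_left hle
    rwa [h0] at this
  have hφ' : Tendsto (deriv φ) (𝓝[>] 0) (𝓝 c) := by
    have := ((hC1.continuousOn_derivWithin (uniqueDiffOn_Icc hd) le_rfl) 0
      ⟨le_rfl, hd.le⟩).tendsto.mono_left hle
    rw [hc] at this
    refine this.congr' ?_
    filter_upwards [hmem] with y hy
    exact derivWithin_of_mem_nhds (Icc_mem_nhds hy.1 hy.2)
  have hH : Tendsto (fun y => cubicEnergy Q κ (φ y)) (𝓝[>] 0) (𝓝 0) := by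
    refine tendsto_of_tendsto_of_tendsto_of_le_of_le' tendsto_const_nhds
      (by simpa using hφ.const_mul (36 * Q)) ?_ ?_
    · filter_upwards [hmem] with y hy using (cubicEnergy_pos hQ hκ (hb y hy)).le
    · filter_upwards [hmem] with y hy using cubicEnergy_le hQ hκ (hb y hy)
  have hlim := tendsto_nhds_unique_of_eventuallyEq ((hφ'.pow 2).sub hH) tendsto_const_nhds
    (by filter_upwards [hmem] with y hy using hconst y hy)
  linarith

theorem deriv_pos_of_cubicEnergy (hQ : 0 < Q)
    (hκ : ∀ t ∈ Icc (0 : ℝ) 1, κ (Q * (3 * t ^ 2 - 2 * t ^ 3)) = t)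
    {c d : ℝ} (hd : 0 < d) {φ : ℝ → ℝ}
    (hC1 : ContDiffOn ℝ 1 φ (Icc 0 d)) (hC2 : ContDiffOn ℝ 2 φ (Ioo 0 d))
    (henergy : ∀ x ∈ Ioo (0 : ℝ) d, deriv φ x ^ 2 = c ^ 2 + cubicEnergy Q κ (φ x))
    (h0 : φ 0 = 0) (hend : φ d = Q)
    (hb : ∀ x ∈ Ioo (0 : ℝ) d, φ x ∈ Ioo 0 Q) {x : ℝ} (hx : x ∈ Ioo 0 d) :
    0 < deriv φ x := by
  obtain ⟨ξ, hξ, hξ'⟩ := exists_deriv_eq_slope φ hd hC1.continuousOn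
    (hC2.differentiableOn (by norm_num))
  have hξpos : 0 < deriv φ ξ := by
    rw [hξ', h0, hend]
    simpa using div_pos hQ hd
  by_contra! hneg
  obtain ⟨y, hy, hy0⟩ := isPreconnected_Ioo.intermediate_value hx hξ
    (hC2.continuousOn_deriv_of_isOpen isOpen_Ioo (by norm_num)) ⟨hneg, hξpos.le⟩
  have := henergy y hy
  rw [hy0] at this
  nlinarith [cubicEnergy_pos hQ hκ (hb y hy), sq_nonneg c]

end CubicInverse

/-- Even after a shift, two solutions of the initial value problem `φ'' = f(φ)`,
`φ(0) = 0`, `φ'(0) = cᵢ` (with `c₁ > c₂ ≥ 0`, `0 < φ < Q` on `(0,dᵢ)` and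
`φ(dᵢ) = Q`) have at most one intersection: if `φ_{c₁}(xb₂−s) = φ_{c₂}(xb₂)` then
`φ_{c₁}(·−s) > φ_{c₂}` to the right of `xb₂` and `φ_{c₁}(·−s) < φ_{c₂}` to the left. -/
theorem stmt12
    (Q : ℝ) (hQ : 0 < Q)
    (κ : ℝ → ℝ) (hκ : ∀ t ∈ Set.Icc (0 : ℝ) 1, κ (Q * (3 * t ^ 2 - 2 * t ^ 3)) = t)
    (f : ℝ → ℝ) (hf : ∀ s : ℝ, f s = 6 * Q * (1 - 2 * κ s))
    (c₁ c₂ s : ℝ) (hc : c₂ < c₁) (hc₂ : 0 ≤ c₂) (hs : 0 ≤ s)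
    (d₁ d₂ : ℝ) (hd₁ : d₁ ∈ Set.Ioc (0 : ℝ) 1) (hd₂ : d₂ ∈ Set.Ioc (0 : ℝ) 1)
    (φ₁ φ₂ : ℝ → ℝ)
    (hC1₁ : ContDiffOn ℝ 1 φ₁ (Set.Icc 0 d₁))
    (hC2₁ : ContDiffOn ℝ 2 φ₁ (Set.Ioo 0 d₁))
    (hode₁ : ∀ x ∈ Set.Ioo (0 : ℝ) d₁, deriv (deriv φ₁) x = f (φ₁ x))
    (h0₁ : φ₁ 0 = 0) (hc₁' : derivWithin φ₁ (Set.Icc 0 d₁) 0 = c₁)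
    (hb₁ : ∀ x ∈ Set.Ioo (0 : ℝ) d₁, 0 < φ₁ x ∧ φ₁ x < Q) (hend₁ : φ₁ d₁ = Q)
    (hC1₂ : ContDiffOn ℝ 1 φ₂ (Set.Icc 0 d₂))
    (hC2₂ : ContDiffOn ℝ 2 φ₂ (Set.Ioo 0 d₂))
    (hode₂ : ∀ x ∈ Set.Ioo (0 : ℝ) d₂, deriv (deriv φ₂) x = f (φ₂ x))
    (h0₂ : φ₂ 0 = 0) (hc₂' : derivWithin φ₂ (Set.Icc 0 d₂) 0 = c₂)
    (hb₂ : ∀ x ∈ Set.Ioo (0 : ℝ) d₂, 0 < φ₂ x ∧ φ₂ x < Q) (hend₂ : φ₂ d₂ = Q)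
    (xb : ℝ) (hxb₁ : xb - s ∈ Set.Ioo (0 : ℝ) d₁) (hxb₂ : xb ∈ Set.Ioo (0 : ℝ) d₂)
    (hint : φ₁ (xb - s) = φ₂ xb) :
    (∀ x : ℝ, xb < x → x < min (d₁ + s) d₂ → φ₂ x < φ₁ (x - s)) ∧
    (∀ x : ℝ, s < x → x < xb → φ₁ (x - s) < φ₂ x) := by
  have hf' : f = fun u => 6 * Q * (1 - 2 * κ u) := funext hf
  subst hf'
  have hen₁ := fun x (hx : x ∈ Ioo 0 d₁) =>
    sq_deriv_eq_add_cubicEnergy hQ hκ hd₁.1 hC1₁ hC2₁ hode₁ h0₁ hc₁' hb₁ hx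
  have hen₂ := fun x (hx : x ∈ Ioo 0 d₂) =>
    sq_deriv_eq_add_cubicEnergy hQ hκ hd₂.1 hC1₂ hC2₂ hode₂ h0₂ hc₂' hb₂ hx
  have hmem₁ : ∀ x ∈ Ioo s (min (d₁ + s) d₂), x - s ∈ Ioo 0 d₁ := fun x hx =>
    ⟨sub_pos.2 hx.1, sub_lt_iff_lt_add.2 (hx.2.trans_le (min_le_left _ _))⟩
  have hmem₂ : ∀ x ∈ Ioo s (min (d₁ + s) d₂), x ∈ Ioo 0 d₂ := fun x hx =>
    ⟨hs.trans_lt hx.1, hx.2.trans_le (min_le_right _ _)⟩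
  have hw : ∀ x ∈ Ioo s (min (d₁ + s) d₂), HasDerivAt (fun x => φ₁ (x - s) - φ₂ x)
      (deriv φ₁ (x - s) - deriv φ₂ x) x := fun x hx =>
    (((hC2₁.differentiableOn (by norm_num)).differentiableAt
      (isOpen_Ioo.mem_nhds (hmem₁ x hx))).hasDerivAt.comp_sub_const x s).sub
    ((hC2₂.differentiableOn (by norm_num)).differentiableAt
      (isOpen_Ioo.mem_nhds (hmem₂ x hx))).hasDerivAt
  have hpos : ∀ x ∈ Ioo s (min (d₁ + s) d₂), φ₁ (x - s) - φ₂ x = 0 →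
      0 < deriv φ₁ (x - s) - deriv φ₂ x := by
    intro x hx h
    have hφ₁ := deriv_pos_of_cubicEnergy hQ hκ hd₁.1 hC1₁ hC2₁ hen₁ h0₁ hend₁ hb₁ (hmem₁ x hx)
    have e₁ := hen₁ _ (hmem₁ x hx)
    have e₂ := hen₂ _ (hmem₂ x hx)
    rw [sub_eq_zero.1 h] at e₁
    have hsq : c₂ ^ 2 < c₁ ^ 2 := pow_lt_pow_left₀ hc hc₂ two_ne_zero
    exact sub_pos.2 (lt_of_pow_lt_pow_left₀ 2 hφ₁.le (by linarith))
  have hz : xb ∈ Ioo s (min (d₁ + s) d₂) :=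
    ⟨sub_pos.1 hxb₁.1, lt_min (sub_lt_iff_lt_add.1 hxb₁.2) hxb₂.2⟩
  have hwz := sub_eq_zero.2 hint
  refine ⟨fun x h h' => sub_pos.1 ?_, fun x h h' => sub_neg.1 ?_⟩
  · exact pos_right_of_deriv_pos_at_zeros (w := fun x => φ₁ (x - s) - φ₂ x) hw hpos hz hwz h h'
  · exact neg_left_of_deriv_pos_at_zeros (w := fun x => φ₁ (x - s) - φ₂ x) hw hpos hz hwz h h'
end
end
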